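/- arXiv:2104.00468 — 4 statements merged into one kernel-verified Lean document; each statement's English description precedes it below -/
import Mathlib

section
/- For a first-order language Σ, there exists a satisfiable Σ-sentence φ such that only finitely many complete theories of Σ contain φ if and only if Σ has only finitely many relation symbols (i.e., the total number of relation symbols of all arities is finite). In particular, if Σ has infinitely many relation symbols then every satisfiable Σ-sentence belongs to infinitely many complete theories of Σ. -/
open FirstOrder Language

theorem aux_term {L : FirstOrder.Language} {M : Type*} {α : Type*}
    (F : ∀ {n}, L.Functions n → (Fin n → M) → M)
    (R R' : ∀ {n}, L.Relations n → (Fin n → M) → Prop) (t : L.Term α) (v : α → M) :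
    @Term.realize L M ⟨F, R⟩ α v t = @Term.realize L M ⟨F, R'⟩ α v t := by
  induction t with
  | var => rfl
  | func f ts ih =>
    change F f _ = F f _
    exact congrArg _ (funext ih)

theorem aux_formula {L : FirstOrder.Language} {M : Type*} {α : Type*} {n : ℕ}
    (φ : L.BoundedFormula α n) :
    ∃ S : Set (Σ n : ℕ, L.Relations n), S.Finite ∧
      ∀ (F : ∀ {n}, L.Functions n → (Fin n → M) → M)
        (R R' : ∀ {n}, L.Relations n → (Fin n → M) → Prop),
        (∀ n (r : L.Relations n), (⟨n, r⟩ : Σ n : ℕ, L.Relations n) ∈ S → ∀ x, R r x ↔ R' r x) →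
        ∀ v xs, @BoundedFormula.Realize L M ⟨F, R⟩ α n φ v xs ↔
          @BoundedFormula.Realize L M ⟨F, R'⟩ α n φ v xs := by
  induction φ with
  | falsum => exact ⟨∅, Set.finite_empty, fun _ _ _ _ _ _ => Iff.rfl⟩
  | equal t₁ t₂ =>
    refine ⟨∅, Set.finite_empty, fun F R R' _ v xs => ?_⟩
    simp only [BoundedFormula.Realize]
    rw [aux_term F R R' t₁, aux_term F R R' t₂]
  | @rel n k r ts =>
    refine ⟨{⟨_, r⟩}, Set.finite_singleton _, fun F R R' h v xs => ?_⟩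
    simp only [BoundedFormula.Realize]
    change R r _ ↔ R' r _
    rw [h _ r rfl]
    refine iff_of_eq (congrArg _ (funext fun i => ?_))
    exact aux_term F R R' _ _
  | imp f g ihf ihg =>
    obtain ⟨S, hS, h⟩ := ihf
    obtain ⟨S', hS', h'⟩ := ihg
    refine ⟨S ∪ S', hS.union hS', fun F R R' hR v xs => ?_⟩
    simp only [BoundedFormula.Realize]
    exact imp_congr (h F R R' (fun n r hr => hR n r (Or.inl hr)) v xs)
      (h' F R R' (fun n r hr => hR n r (Or.inr hr)) v xs)
  | all f ih =>
    obtain ⟨S, hS, h⟩ := ih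
    refine ⟨S, hS, fun F R R' hR v xs => ?_⟩
    simp only [BoundedFormula.Realize]
    exact forall_congr' fun x => h F R R' hR v _

theorem aux_infinite (L : FirstOrder.Language) (hL : ¬ Finite (Σ n : ℕ, L.Relations n))
    (φ : L.Sentence) (hφ : Theory.IsSatisfiable ({φ} : L.Theory)) :
    {T : L.Theory | T.IsMaximal ∧ φ ∈ T}.Infinite := by
  obtain ⟨M⟩ := hφ
  obtain ⟨S, hS, h⟩ := aux_formula (M := M) φ
  have hM : (M : Type _) ⊨ φ := Theory.realize_sentence_of_mem {φ} rfl
  let st : (Σ n : ℕ, L.Relations n) → L.Structure M := fun p =>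
    { funMap := fun f x => Structure.funMap f x
      RelMap := fun {n} r x => ((⟨n, r⟩ : Σ n : ℕ, L.Relations n) ∈ S ∧ Structure.RelMap r x) ∨
        ((⟨n, r⟩ : Σ n : ℕ, L.Relations n) ∉ S ∧ (⟨n, r⟩ : Σ n : ℕ, L.Relations n) = p) }
  have : Infinite (Σ n : ℕ, L.Relations n) := not_finite_iff_infinite.1 hL
  have : Infinite ↥(Sᶜ) := hS.infinite_compl.to_subtype
  refine Set.infinite_of_injective_forall_mem
    (f := fun p : ↥(Sᶜ) => @completeTheory L M (st p.1)) ?_ ?_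
  · rintro ⟨⟨n, r⟩, hp⟩ ⟨q, hq⟩ hpq
    have key : ∀ p, (r.boundedFormula (fun i => &i) : L.BoundedFormula Empty n).alls ∈
        @completeTheory L M (st p) ↔ ∀ xs : Fin n → M, (st p).RelMap r xs := by
      intro p
      letI := st p
      rw [mem_completeTheory]
      simp only [Sentence.Realize, BoundedFormula.realize_alls, BoundedFormula.realize_rel]
      exact Iff.rfl
    have h1 := (key ⟨n, r⟩).2 (fun xs => Or.inr ⟨hp, rfl⟩)
    have h2 := (key q).1 ((Set.ext_iff.1 hpq _).1 h1)
    rcases h2 (fun _ => Classical.arbitrary M) with h3 | h3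
    · exact absurd h3.1 hp
    · exact Subtype.ext h3.2
  · intro p
    refine ⟨@completeTheory.isMaximal L M (st p.1) _, ?_⟩
    refine (h (fun f x => Structure.funMap f x) (fun r x => Structure.RelMap r x)
      (st p.1).RelMap ?_ _ _).1 hM
    intro n r hr x
    exact ⟨fun h => Or.inl ⟨hr, h⟩, fun h => h.elim (fun h => h.2) (fun h => absurd hr h.1)⟩

theorem aux_finite (L : FirstOrder.Language) [Finite (Σ n : ℕ, L.Relations n)] :
    ∃ φ : L.Sentence, Theory.IsSatisfiable ({φ} : L.Theory) ∧
        {T : L.Theory | T.IsMaximal ∧ φ ∈ T}.Finite := by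
  have hφ : ∀ (M : Type _) [L.Structure M],
      M ⊨ (∀' ∀' ((&0).bdEqual &1) : L.Sentence) ↔ Subsingleton M := by
    intro M _
    simp [Sentence.Realize, Formula.Realize, Fin.snoc, subsingleton_iff]
  refine ⟨∀' ∀' ((&0).bdEqual &1), ?_, ?_⟩
  · letI : L.Structure Unit := Inhabited.trivialStructure L
    have : Unit ⊨ ({∀' ∀' ((&0).bdEqual &1)} : L.Theory) := by
      rw [Theory.model_singleton_iff]
      simp [Sentence.Realize, Formula.Realize, Fin.snoc]
    exact Theory.Model.isSatisfiable Unit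
  · rw [← Set.finite_coe_iff]
    let N : ∀ T : {T : L.Theory | T.IsMaximal ∧ (∀' ∀' ((&0).bdEqual &1) : L.Sentence) ∈ T},
      T.1.ModelType := fun T => T.2.1.1.some
    refine Finite.of_injective (β := Set (Σ n : ℕ, L.Relations n))
      (fun T => {p | Structure.RelMap p.2 (fun _ => Classical.arbitrary (N T))}) ?_
    intro T T' h
    have hs : ∀ T, Subsingleton (N T) := fun T =>
      (hφ _).1 (Theory.realize_sentence_of_mem T.1 T.2.2)
    have hc : ∀ T, T.1 = L.completeTheory (N T) := by
      intro T
      rw [← T.2.1.isComplete.eq_complete_theory]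
      ext φ
      exact T.2.1.mem_iff_models φ
    haveI := hs T
    haveI := hs T'
    let e : N T ≃[L] N T' :=
      { toFun := fun _ => Classical.arbitrary _
        invFun := fun _ => Classical.arbitrary _
        left_inv := fun _ => Subsingleton.elim _ _
        right_inv := fun _ => Subsingleton.elim _ _
        map_fun' := fun _ _ => Subsingleton.elim _ _
        map_rel' := fun {n} r x => by
          have := Set.ext_iff.1 h ⟨n, r⟩
          rw [Subsingleton.elim x (fun _ => Classical.arbitrary (N T))]
          exact this.symm }
    apply Subtype.ext
    rw [hc T, hc T']
    exact e.toElementaryEmbedding.elementarilyEquivalent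

/-- There is a satisfiable Σ-sentence contained in only finitely many complete Σ-theories iff Σ
has only finitely many relation symbols; in particular, if Σ has infinitely many relation
symbols then every satisfiable Σ-sentence belongs to infinitely many complete Σ-theories. -/
theorem totally_transcendental_sentence_iff (L : FirstOrder.Language) :
    ((∃ φ : L.Sentence, Theory.IsSatisfiable ({φ} : L.Theory) ∧
        {T : L.Theory | T.IsMaximal ∧ φ ∈ T}.Finite) ↔
      Finite (Σ n : ℕ, L.Relations n)) ∧
    (¬ Finite (Σ n : ℕ, L.Relations n) →
      ∀ φ : L.Sentence, Theory.IsSatisfiable ({φ} : L.Theory) →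
        {T : L.Theory | T.IsMaximal ∧ φ ∈ T}.Infinite) := by
  refine ⟨⟨?_, fun h => aux_finite L⟩, aux_infinite L⟩
  rintro ⟨φ, hφ, hfin⟩
  by_contra hL
  exact aux_infinite L hL φ hφ hfin
end

section
/- Let P be a finite nonempty property (a finite set of complete theories of Σ) with exactly n elements. Then for every positive integer k, there exists a Σ-sentence φ with |P_φ| = k if and only if 1 ≤ k ≤ n. That is, the pt-spectrum of P equals {1, 2, …, n}. -/
open FirstOrder Language

theorem aux_model {L : FirstOrder.Language} {T : L.Theory} (h : T.IsMaximal) :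
    (∀ φ : L.Sentence, φ.not ∈ T ↔ φ ∉ T) ∧ (∀ φ ψ : L.Sentence, (φ ⊓ ψ : L.Sentence) ∈ T ↔ φ ∈ T ∧ ψ ∈ T) ∧
    (∀ φ ψ : L.Sentence, (φ ⊔ ψ : L.Sentence) ∈ T ↔ φ ∈ T ∨ ψ ∈ T) ∧ (⊥ : L.Sentence) ∉ T := by
  obtain ⟨M⟩ := h.1
  have key : ∀ φ : L.Sentence, φ ∈ T ↔ M ⊨ φ := fun φ => by
    rw [h.mem_iff_models, h.isComplete.realize_sentence_iff φ M]
  refine ⟨fun φ => ?_, fun φ ψ => ?_, fun φ ψ => ?_, ?_⟩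
  · rw [key, key, Sentence.realize_not]
  · rw [key, key, key]; exact BoundedFormula.realize_inf
  · rw [key, key, key]; exact BoundedFormula.realize_sup
  · rw [key]; exact id

theorem aux_sep {L : FirstOrder.Language} {T : L.Theory} (h : T.IsMaximal) (A : Set L.Theory)
    (hA : A.Finite) : (∀ S ∈ A, S.IsMaximal) → T ∉ A → ∃ φ ∈ T, ∀ S ∈ A, φ ∉ S := by
  induction A, hA using Set.Finite.induction_on with
  | empty =>
    intro _ _
    exact ⟨Formula.not ⊥, ((aux_model h).1 _).2 (aux_model h).2.2.2, by simp⟩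
  | @insert S A _ _ ih =>
    intro hm hT
    simp only [Set.mem_insert_iff, not_or, forall_eq_or_imp] at hm hT ⊢
    obtain ⟨φ, h1, h2⟩ := ih hm.2 hT.2
    have : ∃ ψ ∈ T, ψ ∉ S := by
      by_contra! hc
      apply hT.1
      refine Set.Subset.antisymm hc fun φ hφ => ?_
      by_contra hn
      exact ((aux_model hm.1).1 φ).1 (hc _ (((aux_model h).1 φ).2 hn)) hφ
    obtain ⟨ψ, h3, h4⟩ := this
    refine ⟨φ ⊓ ψ, ((aux_model h).2.1 _ _).2 ⟨h1, h3⟩, ?_, fun R hR hc => ?_⟩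
    · exact fun hc => h4 (((aux_model hm.1).2.1 _ _).1 hc).2
    · exact h2 R hR (((aux_model (hm.2 R hR)).2.1 _ _).1 hc).1

theorem aux_def {L : FirstOrder.Language} (P : Set L.Theory)
    (hP : ∀ T ∈ P, T.IsMaximal) (hfin : P.Finite) (Q : Set L.Theory) (hQ : Q.Finite) :
    Q ⊆ P → ∃ φ : L.Sentence, ∀ T ∈ P, φ ∈ T ↔ T ∈ Q := by
  induction Q, hQ using Set.Finite.induction_on with
  | empty => exact fun _ => ⟨⊥, fun T hT => by simpa using (aux_model (hP T hT)).2.2.2⟩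
  | @insert S A _ _ ih =>
    intro hs
    obtain ⟨φ, h1⟩ := ih ((Set.subset_insert _ _).trans hs)
    obtain ⟨ψ, h2, h3⟩ := aux_sep (hP S (hs (Set.mem_insert _ _))) (P \ {S}) hfin.sdiff
      (fun R hR => hP R hR.1) (by simp)
    refine ⟨φ ⊔ ψ, fun T hT => ?_⟩
    rw [(aux_model (hP T hT)).2.2.1, h1 T hT, Set.mem_insert_iff, or_comm]
    refine or_congr_left ⟨fun h => ?_, fun h => h ▸ h2⟩
    by_contra hc
    exact h3 T ⟨hT, hc⟩ h

/-- For a finite nonempty property `P` with exactly `n` elements, for each positive integer `k`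
there is a sentence φ with `|P_φ| = k` iff `1 ≤ k ≤ n`; i.e. the pt-spectrum of `P` is
`{1, …, n}`. -/
theorem ptSpectrum_of_finite {L : FirstOrder.Language} (P : Set L.Theory)
    (hP : ∀ T ∈ P, T.IsMaximal) (hfin : P.Finite) (hne : P.Nonempty)
    (n : ℕ) (hcard : P.ncard = n) :
    ∀ k : ℕ, 1 ≤ k →
      ((∃ φ : L.Sentence, {T ∈ P | φ ∈ T}.ncard = k) ↔ k ≤ n) := by
  intro k _
  subst hcard
  constructor
  · rintro ⟨φ, rfl⟩
    exact Set.ncard_le_ncard (Set.sep_subset _ _) hfin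
  · intro hk
    obtain ⟨Q, hQ, rfl⟩ := Set.exists_subset_card_eq hk
    obtain ⟨φ, hφ⟩ := aux_def P hP hfin Q (hfin.subset hQ) hQ
    refine ⟨φ, congrArg _ ?_⟩
    ext T
    exact ⟨fun h => (hφ T h.1).1 h.2, fun h => ⟨hQ h, (hφ T (hQ h)).2 h⟩⟩
end

section
/- Let P be a nonempty property (a set of complete theories of Σ) and let S = {k ∈ ℕ : k ≥ 1 and there exists a sentence φ with P_φ finite and |P_φ| = k}. Then S is downward closed among positive integers (if k ∈ S and 1 ≤ j ≤ k then j ∈ S); consequently, if S is nonempty then either S = {1, …, n} for some n ≥ 1 or S is the set of all positive integers. -/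
open FirstOrder Language

/-- The finite part of the pt-spectrum of a property `P`: the set of positive integers `k` such
that `P_φ` is finite with exactly `k` elements for some sentence φ. -/
def finPtSpectrum {L : FirstOrder.Language} (P : Set L.Theory) : Set ℕ :=
  {k | 1 ≤ k ∧ ∃ φ : L.Sentence, {T ∈ P | φ ∈ T}.Finite ∧ {T ∈ P | φ ∈ T}.ncard = k}

theorem max_realize.{u, v} {L : FirstOrder.Language.{u, v}} {T : L.Theory} (hT : T.IsMaximal) :
    ∃ M : FirstOrder.Language.Theory.ModelType.{u, v, max u v} T, ∀ φ : L.Sentence, φ ∈ T ↔ M ⊨ φ := by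
  obtain ⟨M⟩ := hT.1
  refine ⟨M, fun φ => ⟨fun h => FirstOrder.Language.Theory.realize_sentence_of_mem T h, fun h => ?_⟩⟩
  rcases hT.mem_or_not_mem φ with h' | h'
  · exact h'
  · have h2 : M ⊨ φ.not := FirstOrder.Language.Theory.realize_sentence_of_mem T h'
    rw [FirstOrder.Language.Sentence.realize_not] at h2
    exact absurd h h2

theorem max_not {L : FirstOrder.Language} {T : L.Theory} (hT : T.IsMaximal) (φ : L.Sentence) :
    φ.not ∈ T ↔ φ ∉ T := by
  obtain ⟨M, hM⟩ := max_realize hT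
  rw [hM, hM, FirstOrder.Language.Sentence.realize_not]

theorem max_inf {L : FirstOrder.Language} {T : L.Theory} (hT : T.IsMaximal) (φ ψ : L.Sentence) :
    (φ ⊓ ψ : L.Sentence) ∈ T ↔ φ ∈ T ∧ ψ ∈ T := by
  obtain ⟨M, hM⟩ := max_realize hT
  rw [hM, hM, hM]
  exact FirstOrder.Language.Formula.realize_inf

theorem max_top {L : FirstOrder.Language} {T : L.Theory} (hT : T.IsMaximal) :
    (⊤ : L.Sentence) ∈ T := by
  obtain ⟨M, hM⟩ := max_realize hT
  rw [hM]
  exact FirstOrder.Language.Formula.realize_top.2 trivial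

theorem max_sep {L : FirstOrder.Language} {T₀ T : L.Theory} (h₀ : T₀.IsMaximal)
    (hT : T.IsMaximal) (hne : T ≠ T₀) : ∃ ψ ∈ T₀, ψ ∉ T := by
  by_contra! h
  apply hne
  ext χ
  refine ⟨fun hχ => ?_, h χ⟩
  by_contra hn
  exact (max_not hT χ).1 (h _ ((max_not h₀ χ).2 hn)) hχ

theorem max_sep_fin {L : FirstOrder.Language} {T₀ : L.Theory} (h₀ : T₀.IsMaximal)
    (F : Set L.Theory) (hF : F.Finite) :
    (∀ T ∈ F, T.IsMaximal ∧ T ≠ T₀) → ∃ ψ ∈ T₀, ∀ T ∈ F, ψ ∉ T := by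
  induction F, hF using Set.Finite.induction_on with
  | empty => exact fun _ => ⟨⊤, max_top h₀, by simp⟩
  | @insert T F _ _ ih =>
    intro h
    obtain ⟨ψ, hψ, hψF⟩ := ih fun T' hT' => h T' (Set.mem_insert_of_mem _ hT')
    obtain ⟨hT, hne⟩ := h T (Set.mem_insert _ _)
    obtain ⟨χ, hχ, hχT⟩ := max_sep h₀ hT hne
    refine ⟨ψ ⊓ χ, (max_inf h₀ _ _).2 ⟨hψ, hχ⟩, fun T' hT' hmem => ?_⟩
    have h2 := (max_inf (h T' hT').1 _ _).1 hmem
    rcases hT' with rfl | hT'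
    · exact hχT h2.2
    · exact hψF T' hT' h2.1

theorem finPtSpectrum_pred {L : FirstOrder.Language} (P : Set L.Theory)
    (hP : ∀ T ∈ P, T.IsMaximal) (k : ℕ) (hk : 1 ≤ k) (h : k + 1 ∈ finPtSpectrum P) :
    k ∈ finPtSpectrum P := by
  obtain ⟨-, φ, hfin, hcard⟩ := h
  obtain ⟨T₀, hT₀⟩ : {T ∈ P | φ ∈ T}.Nonempty :=
    Set.nonempty_of_ncard_ne_zero (by omega)
  obtain ⟨ψ, hψ, hψF⟩ := max_sep_fin (hP T₀ hT₀.1) ({T ∈ P | φ ∈ T} \ {T₀}) hfin.diff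
    fun T hT => ⟨hP T hT.1.1, hT.2⟩
  have key : {T ∈ P | (φ ⊓ ψ.not : L.Sentence) ∈ T} = {T ∈ P | φ ∈ T} \ {T₀} := by
    ext T
    constructor
    · rintro ⟨hT, hm⟩
      obtain ⟨h1, h2⟩ := (max_inf (hP T hT) _ _).1 hm
      refine ⟨⟨hT, h1⟩, ?_⟩
      rintro rfl
      exact (max_not (hP _ hT) _).1 h2 hψ
    · intro hT
      exact ⟨hT.1.1, (max_inf (hP T hT.1.1) _ _).2
        ⟨hT.1.2, (max_not (hP T hT.1.1) _).2 (hψF T hT)⟩⟩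
  refine ⟨hk, φ ⊓ ψ.not, ?_, ?_⟩
  · rw [key]; exact hfin.diff
  · rw [key, Set.ncard_diff_singleton_of_mem hT₀, hcard]; rfl

/-- The finite part `S` of the pt-spectrum of a nonempty property `P` is downward closed among
positive integers; consequently, if `S` is nonempty then either `S = {1, …, n}` for some `n ≥ 1`
or `S` is the set of all positive integers. -/
theorem finPtSpectrum_downward_closed {L : FirstOrder.Language} (P : Set L.Theory)
    (hP : ∀ T ∈ P, T.IsMaximal) (hne : P.Nonempty) :
    (∀ k ∈ finPtSpectrum P, ∀ j : ℕ, 1 ≤ j → j ≤ k → j ∈ finPtSpectrum P) ∧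
    ((finPtSpectrum P).Nonempty →
      (∃ n : ℕ, 1 ≤ n ∧ finPtSpectrum P = Set.Icc 1 n) ∨
        finPtSpectrum P = {k : ℕ | 1 ≤ k}) := by
  have down : ∀ k ∈ finPtSpectrum P, ∀ j : ℕ, 1 ≤ j → j ≤ k → j ∈ finPtSpectrum P := by
    intro k hk j hj hjk
    induction k, hjk using Nat.le_induction with
    | base => exact hk
    | succ n hn ih => exact ih (finPtSpectrum_pred P hP n (hj.trans hn) hk)
  refine ⟨down, fun hS => ?_⟩
  by_cases hb : BddAbove (finPtSpectrum P)
  · left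
    have hm := Nat.sSup_mem hS hb
    refine ⟨sSup (finPtSpectrum P), hm.1, ?_⟩
    ext j
    exact ⟨fun h => ⟨h.1, le_csSup hb h⟩, fun h => down _ hm j h.1 h.2⟩
  · right
    ext j
    refine ⟨fun h => h.1, fun h => ?_⟩
    obtain ⟨k, hk, hjk⟩ := not_bddAbove_iff.1 hb j
    exact down k hk j h hjk.le
end

section
/- Let 𝒯₀ be an E-closed property (Cl_E(𝒯₀) = 𝒯₀) and let 𝒯'₀ ⊆ 𝒯₀ be a generating set for 𝒯₀, i.e., Cl_E(𝒯'₀) = 𝒯₀. The following are equivalent: (1) 𝒯'₀ is the least generating set for 𝒯₀ (it is contained in every generating set for 𝒯₀); (2) 𝒯'₀ is a minimal generating set for 𝒯₀ (no proper subset of 𝒯'₀ generates 𝒯₀); (3) every theory in 𝒯'₀ is isolated inside 𝒯'₀ by some sentence, i.e., for every T ∈ 𝒯'₀ there is φ ∈ T with (𝒯'₀)_φ = {T}; (4) every theory in 𝒯'₀ is isolated inside 𝒯₀ by some sentence, i.e., for every T ∈ 𝒯'₀ there is φ ∈ T with (𝒯₀)_φ = {T}. -/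
open FirstOrder Language

/-- The E-closure of a property `P`: the set of complete theories `T` such that every sentence
of `T` belongs to some theory of `P`. -/
def ClE {L : FirstOrder.Language} (P : Set L.Theory) : Set L.Theory :=
  {T | T.IsMaximal ∧ ∀ φ ∈ T, ∃ T' ∈ P, φ ∈ T'}

theorem my_inf_mem {L : FirstOrder.Language} {T : L.Theory} (h : T.IsMaximal) (φ ψ : L.Sentence) :
    (φ ⊓ ψ : L.Sentence) ∈ T ↔ φ ∈ T ∧ ψ ∈ T := by
  rw [h.mem_iff_models, h.mem_iff_models, h.mem_iff_models]
  simp only [FirstOrder.Language.Theory.models_sentence_iff]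
  simp only [FirstOrder.Language.Sentence.Realize, FirstOrder.Language.Formula.realize_inf]
  exact forall_and

theorem my_not_mem {L : FirstOrder.Language} {T : L.Theory} (h : T.IsMaximal) (φ : L.Sentence)
    (h1 : φ ∈ T) (h2 : φ.not ∈ T) : False := by
  obtain ⟨M⟩ := h.1
  have a := FirstOrder.Language.Theory.realize_sentence_of_mem (M := M) T h1
  have b := FirstOrder.Language.Theory.realize_sentence_of_mem (M := M) T h2
  exact (FirstOrder.Language.Sentence.realize_not M).1 b a

/-- For a generating set 𝒯'₀ of an E-closed family 𝒯₀ (i.e. 𝒯'₀ ⊆ 𝒯₀ and Cl_E(𝒯'₀) = 𝒯₀), TFAE: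
(1) 𝒯'₀ is the least generating set; (2) 𝒯'₀ is a minimal generating set; (3) every theory of
𝒯'₀ is isolated in 𝒯'₀ by some sentence; (4) every theory of 𝒯'₀ is isolated in 𝒯₀ by some
sentence. -/
theorem least_generating_tfae {L : FirstOrder.Language} (𝒯₀ 𝒯'₀ : Set L.Theory)
    (hE : ClE 𝒯₀ = 𝒯₀) (hsub : 𝒯'₀ ⊆ 𝒯₀) (hgen : ClE 𝒯'₀ = 𝒯₀) :
    List.TFAE
      [∀ 𝒯' : Set L.Theory, 𝒯' ⊆ 𝒯₀ → ClE 𝒯' = 𝒯₀ → 𝒯'₀ ⊆ 𝒯',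
       ∀ 𝒯' : Set L.Theory, 𝒯' ⊂ 𝒯'₀ → ClE 𝒯' ≠ 𝒯₀,
       ∀ T ∈ 𝒯'₀, ∃ φ ∈ T, {T' ∈ 𝒯'₀ | φ ∈ T'} = {T},
       ∀ T ∈ 𝒯'₀, ∃ φ ∈ T, {T' ∈ 𝒯₀ | φ ∈ T'} = {T}] := by
  have hmax : ∀ T ∈ 𝒯₀, T.IsMaximal := fun T hT => by
    rw [← hE] at hT; exact hT.1
  tfae_have 1 → 2 := by
    intro h 𝒯' hss hc
    exact hss.2 (h 𝒯' (hss.1.trans hsub) hc)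
  tfae_have 2 → 3 := by
    intro h T hT
    by_contra hno
    have key : ∀ φ ∈ T, ∃ T' ∈ 𝒯'₀ \ {T}, φ ∈ T' := by
      intro φ hφ
      by_contra hn
      refine hno ⟨φ, hφ, ?_⟩
      ext S
      constructor
      · rintro ⟨hS, hφS⟩
        by_contra hne
        exact hn ⟨S, ⟨hS, hne⟩, hφS⟩
      · rintro rfl
        exact ⟨hT, hφ⟩
    refine h (𝒯'₀ \ {T}) ⟨Set.diff_subset, fun hs => (hs hT).2 rfl⟩ ?_
    ext S
    constructor
    · rintro ⟨hm, hS⟩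
      rw [← hgen]
      refine ⟨hm, fun φ hφ => ?_⟩
      obtain ⟨T', hT', hh⟩ := hS φ hφ
      exact ⟨T', hT'.1, hh⟩
    · intro hS
      rw [← hgen] at hS
      refine ⟨hS.1, fun φ hφ => ?_⟩
      obtain ⟨T', hT', hh⟩ := hS.2 φ hφ
      by_cases he : T' = T
      · exact key φ (he ▸ hh)
      · exact ⟨T', ⟨hT', he⟩, hh⟩
  tfae_have 3 → 4 := by
    intro h T hT
    obtain ⟨φ, hφ, hiso⟩ := h T hT
    refine ⟨φ, hφ, ?_⟩
    ext S
    constructor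
    · rintro ⟨hS, hφS⟩
      have hSm := hmax S hS
      have hTm := hmax T (hsub hT)
      rw [← hgen] at hS
      have hle : ∀ ψ ∈ S, ψ ∈ T := by
        intro ψ hψ
        obtain ⟨T', hT', hh⟩ := hS.2 _ ((my_inf_mem hSm φ ψ).2 ⟨hφS, hψ⟩)
        have h2 := (my_inf_mem (hmax T' (hsub hT')) φ ψ).1 hh
        have h3 : T' ∈ ({T} : Set L.Theory) := hiso ▸ ⟨hT', h2.1⟩
        have h4 : T' = T := h3
        exact h4 ▸ h2.2
      refine Set.Subset.antisymm hle fun ψ hψ => ?_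
      rcases hSm.mem_or_not_mem ψ with h5 | h5
      · exact h5
      · exact (my_not_mem hTm ψ hψ (hle _ h5)).elim
    · rintro rfl
      exact ⟨hsub hT, hφ⟩
  tfae_have 4 → 1 := by
    intro h 𝒯' hs hc T hT
    obtain ⟨φ, hφ, hiso⟩ := h T hT
    have hT0 := hsub hT
    rw [← hc] at hT0
    obtain ⟨T', hT', hh⟩ := hT0.2 φ hφ
    have h3 : T' ∈ ({T} : Set L.Theory) := hiso ▸ ⟨hs hT', hh⟩
    have h4 : T' = T := h3
    exact h4 ▸ hT'
  tfae_finish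
end
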